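/- Let p be a prime and let A ⊆ GF(p) with |A| = n ≥ 2 and n² < p. Then the set {(x − y)/(z − w) + z + w : w, x, y, z ∈ A, z ≠ w} ⊆ GF(p) has at least n² − n elements. -/

import Mathlib

/-!
The set in question consists of slopes: `(x - y)/(z - w) + z + w` is the slope of the line through
the points `(z, x + z²)` and `(w, y + w²)`. Hence it is the set of finite directions determined by
`U = {(a, b + a²) : a, b ∈ A}`, a set of `n² < p` points lying on `n` vertical lines, with `n`
points on each. The bound follows from the Rédei polynomial method.

Consider `R(X, Z) = ∏ (X - (α - β Z))` over `(α, β) ∈ U`. When `z ≠ 0` and `z⁻¹` is not a direction,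
the values `α - β z` are distinct, so `R(X, z)` divides `X^p - X`. Divide `X^p - X` by `R` in
`GF(p)[Z][X]`: the remainder has total degree at most `p` (`exists_remainder`), and it vanishes at
each such `z`. If there are `d` directions, then there are at least `p - 1 - d` such `z`, so all
the coefficients of `X^i` with `i > d + 1` in the remainder are zero as polynomials in `Z`.
Specialising to `Z = 0`, which corresponds to the vertical direction, shows that `∏_{a ∈ A} (X - a)^n`
divides `X^p - g` for some `g` of degree at most `d + 1` (`exists_lacunary_multiple`).

Taking derivatives, `∏_{a ∈ A} (X - a)^(n-1)` divides `g'`, of degree at most `d`. If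
`d < n² - n`, then `g' = 0`; as `deg g < p`, `g` is a constant `c`, and `X^p - c` has the single
root `c` in `GF(p)`, contradicting `|A| ≥ 2` (`sub_le_of_dvd_X_pow_sub`).
-/

open Polynomial

/-- The bivariate polynomial `f`, viewed as a polynomial in `X` with coefficients in `F[Z]`,
has total degree at most `s`. -/
def TotalDegLE {F : Type*} [CommRing F] (s : ℕ) (f : F[X][X]) : Prop :=
  ∀ i j, s < i + j → (f.coeff i).coeff j = 0

theorem TotalDegLE.mul {F : Type*} [CommRing F] {s t : ℕ} {f g : F[X][X]}
    (hf : TotalDegLE s f) (hg : TotalDegLE t g) : TotalDegLE (s + t) (f * g) := by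
  intro i j hij
  rw [coeff_mul, finsetSum_coeff]
  refine Finset.sum_eq_zero fun a ha => ?_
  rw [coeff_mul]
  refine Finset.sum_eq_zero fun b hb => ?_
  rw [Finset.HasAntidiagonal.mem_antidiagonal] at ha hb
  by_cases h : s < a.1 + b.1
  · rw [hf _ _ h, zero_mul]
  · rw [hg a.2 b.2 (by omega), mul_zero]

theorem totalDegLE_one {F : Type*} [CommRing F] : TotalDegLE 0 (1 : F[X][X]) := by
  intro i j hij
  rw [coeff_one]
  split_ifs with h
  · rw [coeff_one, if_neg (by omega)]
  · simp

theorem totalDegLE_X {F : Type*} [CommRing F] : TotalDegLE 1 (X : F[X][X]) := by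
  intro i j hij
  rw [coeff_X]
  split_ifs with h
  · rw [coeff_one, if_neg (by omega)]
  · simp

theorem TotalDegLE.sub {F : Type*} [CommRing F] {s : ℕ} {f g : F[X][X]}
    (hf : TotalDegLE s f) (hg : TotalDegLE s g) : TotalDegLE s (f - g) := by
  intro i j hij
  rw [coeff_sub, coeff_sub, hf i j hij, hg i j hij, sub_zero]

theorem TotalDegLE.mono {F : Type*} [CommRing F] {s t : ℕ} {f : F[X][X]}
    (hf : TotalDegLE s f) (h : s ≤ t) : TotalDegLE t f :=
  fun i j hij => hf i j (h.trans_lt hij)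

/-- The Rédei polynomial `∏ (X - (α - β Z))`, over the points `(α, β)` of `U`, as a polynomial in
`X` over `F[Z]`. -/
noncomputable def redei {F : Type*} [CommRing F] (U : Finset (F × F)) : F[X][X] :=
  ∏ q ∈ U, (X - C (C q.1 - C q.2 * X))

theorem redei_monic {F : Type*} [CommRing F] (U : Finset (F × F)) : (redei U).Monic :=
  monic_prod_of_monic _ _ fun _ _ => monic_X_sub_C _

theorem redei_natDegree {F : Type*} [CommRing F] [IsDomain F] (U : Finset (F × F)) :
    (redei U).natDegree = U.card := by
  rw [redei, natDegree_prod_of_monic _ _ fun _ _ => monic_X_sub_C _]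
  simp only [natDegree_X_sub_C, Finset.sum_const, smul_eq_mul, mul_one]

theorem redei_totalDegLE {F : Type*} [CommRing F] (U : Finset (F × F)) :
    TotalDegLE U.card (redei U) := by
  classical
  rw [redei]
  induction U using Finset.induction_on with
  | empty => simpa using totalDegLE_one
  | insert q U hq ih =>
    rw [Finset.prod_insert hq, Finset.card_insert_of_notMem hq, add_comm]
    refine (totalDegLE_X.sub ?_).mul ih
    intro i j hij
    rw [coeff_C]
    split_ifs with h
    · rw [coeff_sub, coeff_C_mul, coeff_X, coeff_C, if_neg (by omega), if_neg (by omega)]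
      simp
    · simp

theorem redei_map {F : Type*} [CommRing F] (U : Finset (F × F)) (z : F) :
    (redei U).map (evalRingHom z) = ∏ q ∈ U, (X - C (q.1 - q.2 * z)) := by
  rw [redei, Polynomial.map_prod]
  refine Finset.prod_congr rfl fun q _ => ?_
  simp

/-- Dividing `X ^ k` by a monic polynomial of total degree equal to its degree in `X` gives a
remainder of total degree at most `k`. -/
theorem exists_remainder {F : Type*} [CommRing F] {N : ℕ} (hN : 0 < N) {R : F[X][X]}
    (hR : R.Monic) (hdeg : R.natDegree = N) (hW : TotalDegLE N R) (k : ℕ) :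
    ∃ r : F[X][X], R ∣ X ^ k - r ∧ (∀ i, N ≤ i → r.coeff i = 0) ∧ TotalDegLE k r := by
  induction k with
  | zero =>
    refine ⟨1, by simp, fun i hi => ?_, totalDegLE_one⟩
    rw [coeff_one, if_neg (by omega)]
  | succ k ih =>
    obtain ⟨r, hr, hr0, hrW⟩ := ih
    -- subtract the multiple of `R` that cancels the `X ^ N` term of `X * r`
    refine ⟨X * r - C (r.coeff (N - 1)) * R, ?_, ?_, ?_⟩
    · have : (X : F[X][X]) ^ (k + 1) - (X * r - C (r.coeff (N - 1)) * R)
          = X * (X ^ k - r) + C (r.coeff (N - 1)) * R := by ring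
      rw [this]
      exact dvd_add (hr.mul_left _) (dvd_mul_left _ _)
    · intro i hi
      obtain ⟨m, rfl⟩ : ∃ m, i = m + 1 := ⟨i - 1, by omega⟩
      rw [coeff_sub, coeff_X_mul, coeff_C_mul]
      rcases hi.eq_or_lt with h | h
      · have h1 : R.coeff (m + 1) = 1 := by
          rw [← h, ← hdeg]; exact hR
        rw [h1, h, Nat.add_sub_cancel, mul_one, sub_self]
      · rw [hr0 m (by omega), coeff_eq_zero_of_natDegree_lt (p := R) (by omega), mul_zero, sub_zero]
    · refine TotalDegLE.sub ?_ ?_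
      · rw [add_comm]; exact totalDegLE_X.mul hrW
      · intro i j hij
        rw [coeff_C_mul, coeff_mul]
        refine Finset.sum_eq_zero fun b hb => ?_
        rw [Finset.HasAntidiagonal.mem_antidiagonal] at hb
        by_cases h : k < N - 1 + b.1
        · rw [hrW _ _ h, zero_mul]
        · rw [hW i b.2 (by omega), mul_zero]

/-- If `q ↦ q.1 - q.2 * z` is injective on `U` for many `z`, then the specialisation of the Rédei
polynomial at `z = 0` divides a lacunary polynomial `X ^ p - g` with `g` of small degree. -/
theorem exists_lacunary_multiple {p : ℕ} [Fact p.Prime] (U : Finset (ZMod p × ZMod p))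
    (hU : 0 < U.card) (Z : Finset (ZMod p))
    (hZ : ∀ z ∈ Z, Set.InjOn (fun q : ZMod p × ZMod p => q.1 - q.2 * z) U)
    (e : ℕ) (he : 1 ≤ e) (hpe : p ≤ e + Z.card) :
    ∃ g : (ZMod p)[X], g.natDegree ≤ e ∧ (∏ q ∈ U, (X - C q.1)) ∣ X ^ p - g := by
  have hp1 : 1 ≤ p := (Fact.out : p.Prime).one_le
  obtain ⟨r₁, hr₁, hr₁0, hr₁W⟩ := exists_remainder hU (redei_monic U) (redei_natDegree U)
    (redei_totalDegLE U) p
  obtain ⟨r₂, hr₂, hr₂0, hr₂W⟩ := exists_remainder hU (redei_monic U) (redei_natDegree U)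
    (redei_totalDegLE U) 1
  obtain ⟨r, hr⟩ : ∃ r, r = r₁ - r₂ := ⟨_, rfl⟩
  have hrW : TotalDegLE p r := hr ▸ hr₁W.sub (hr₂W.mono hp1)
  have hr0 : ∀ i, U.card ≤ i → r.coeff i = 0 := fun i hi => by
    rw [hr, coeff_sub, hr₁0 i hi, hr₂0 i hi, sub_zero]
  have hdvd : redei U ∣ (X ^ p - X) - r := by
    have : (X ^ p - X : (ZMod p)[X][X]) - r = (X ^ p - r₁) - (X ^ 1 - r₂) := by
      rw [hr]; ring
    rw [this]; exact dvd_sub hr₁ hr₂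
  have hvan : ∀ z ∈ Z, r.map (evalRingHom z) = 0 := by
    intro z hz
    have h1 : (redei U).map (evalRingHom z) ∣ X ^ p - X := by
      rw [redei_map]
      refine Finset.prod_dvd_of_coprime ?_ ?_
      · intro a ha b hb hab
        refine isCoprime_X_sub_C_of_isUnit_sub (sub_ne_zero_of_ne fun h => hab ?_).isUnit
        exact hZ z hz ha hb h
      · intro q _
        rw [dvd_iff_isRoot]
        simp [ZMod.pow_card]
    have h2 := Polynomial.map_dvd (evalRingHom z) hdvd
    rw [Polynomial.map_sub, Polynomial.map_sub, Polynomial.map_pow, map_X] at h2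
    have h3 := (dvd_sub_right h1).1 h2
    refine eq_zero_of_dvd_of_degree_lt h3 ?_
    rw [(redei_monic U).degree_map, degree_eq_natDegree (redei_monic U).ne_zero,
      redei_natDegree, degree_lt_iff_coeff_zero]
    intro i hi
    rw [coeff_map, hr0 i hi, map_zero]
  have hcoeff : ∀ i, e < i → r.coeff i = 0 := by
    intro i hi
    refine eq_zero_of_degree_lt_of_eval_finset_eq_zero Z ?_ ?_
    · rw [degree_lt_iff_coeff_zero]
      intro j hj
      exact hrW i j (by omega)
    · intro z hz
      have := congrArg (fun f => coeff f i) (hvan z hz)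
      simpa using this
  refine ⟨X + r.map (evalRingHom 0), ?_, ?_⟩
  · rw [natDegree_le_iff_coeff_eq_zero]
    intro i hi
    rw [coeff_add, coeff_map, hcoeff i hi, coeff_X, if_neg (by omega)]
    simp
  · have h := Polynomial.map_dvd (evalRingHom 0) hdvd
    rw [redei_map, Polynomial.map_sub, Polynomial.map_sub, Polynomial.map_pow, map_X] at h
    simpa [sub_sub] using h

/-- A lacunary polynomial `X ^ p - g` divisible by `∏ (X - a) ^ n` over the `n ≥ 2` elements `a` of
`A` has `deg g > n ^ 2 - n`: otherwise `g' = 0`, and `X ^ p - g` would be a `p`-th power. -/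
theorem sub_le_of_dvd_X_pow_sub {p n : ℕ} [Fact p.Prime] (A : Finset (ZMod p))
    (hcard : A.card = n) (hn : 2 ≤ n) (hn2 : n ^ 2 < p) (g : (ZMod p)[X])
    (hdvd : (∏ a ∈ A, (X - C a) ^ n) ∣ X ^ p - g) : n ^ 2 - n < g.natDegree := by
  by_contra! hg
  have hgp : g.natDegree < p := by omega
  have hder : (∏ a ∈ A, (X - C a) ^ (n - 1)) ∣ derivative g := by
    refine Finset.prod_dvd_of_coprime ?_ ?_
    · intro a _ b _ hab
      have h : IsCoprime (X - C a) (X - C b) :=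
        isCoprime_X_sub_C_of_isUnit_sub (sub_ne_zero_of_ne hab).isUnit
      change IsCoprime ((X - C a) ^ (n - 1)) ((X - C b) ^ (n - 1))
      exact h.pow
    · intro a ha
      have h1 : (X - C a) ^ n ∣ X ^ p - g := (Finset.dvd_prod_of_mem (fun a => (X - C a) ^ n) ha).trans hdvd
      have h2 := pow_sub_one_dvd_derivative_of_pow_dvd h1
      rw [derivative_sub, derivative_X_pow, CharP.cast_eq_zero] at h2
      simpa using h2
  have hmon : (∏ a ∈ A, (X - C a) ^ (n - 1)).Monic :=
    monic_prod_of_monic _ _ fun _ _ => (monic_X_sub_C _).pow _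
  have hdeg : (∏ a ∈ A, (X - C a) ^ (n - 1)).natDegree = n ^ 2 - n := by
    rw [natDegree_prod_of_monic _ _ fun _ _ => (monic_X_sub_C _).pow _]
    simp only [natDegree_pow, natDegree_X_sub_C, Finset.sum_const, smul_eq_mul, mul_one, hcard]
    rw [Nat.mul_sub, mul_one, sq]
  have hpos : 0 < n ^ 2 - n := by
    have : n < n ^ 2 := by nlinarith
    omega
  have hder0 : derivative g = 0 := by
    by_contra h0
    have h1 := natDegree_le_of_dvd hder h0
    have h2 := natDegree_derivative_le g
    omega
  obtain ⟨c, rfl⟩ : ∃ c, g = C c := by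
    refine ⟨g.coeff 0, ?_⟩
    ext i
    rw [coeff_C]
    split_ifs with h
    · rw [h]
    · obtain ⟨m, rfl⟩ : ∃ m, i = m + 1 := ⟨i - 1, by omega⟩
      by_cases hm : m + 1 < p
      · have h1 := congrArg (fun f => coeff f m) hder0
        simp only [coeff_derivative, coeff_zero] at h1
        refine (mul_eq_zero.1 h1).resolve_right fun h2 => ?_
        have h3 : ((m + 1 : ℕ) : ZMod p) = 0 := by exact_mod_cast h2
        rw [ZMod.natCast_eq_zero_iff] at h3
        exact absurd (Nat.le_of_dvd (by omega) h3) (by omega)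
      · exact coeff_eq_zero_of_natDegree_lt (by omega)
  have hroot : ∀ a ∈ A, a = c := by
    intro a ha
    have h1 : (X - C a) ∣ X ^ p - C c :=
      (dvd_pow_self _ (by omega)).trans
        ((Finset.dvd_prod_of_mem (fun a => (X - C a) ^ n) ha).trans hdvd)
    rw [dvd_iff_isRoot] at h1
    simpa [ZMod.pow_card, sub_eq_zero] using h1
  obtain ⟨a, ha, b, hb, hab⟩ := Finset.one_lt_card.1 (by omega : 1 < A.card)
  exact hab ((hroot a ha).trans (hroot b hb).symm)

/-- For `A ⊆ GF(p)` with `|A| = n ≥ 2` and `n² < p`, the set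
`{(x-y)/(z-w) + z + w : w,x,y,z ∈ A, z ≠ w}` has at least `n² - n` elements. -/
theorem shifted_quotient_set_lower_bound (p n : ℕ) (hp : p.Prime)
    (A : Finset (ZMod p)) (hcard : A.card = n) (hn : 2 ≤ n) (hn2 : n ^ 2 < p) :
    n ^ 2 - n ≤
      {t : ZMod p | ∃ w ∈ A, ∃ x ∈ A, ∃ y ∈ A, ∃ z ∈ A, z ≠ w ∧
        t = (x - y) * (z - w)⁻¹ + z + w}.ncard := by
  classical
  have : Fact p.Prime := ⟨hp⟩
  set S := {t : ZMod p | ∃ w ∈ A, ∃ x ∈ A, ∃ y ∈ A, ∃ z ∈ A, z ≠ w ∧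
        t = (x - y) * (z - w)⁻¹ + z + w} with hS
  have hinj : Function.Injective fun q : ZMod p × ZMod p => (q.1, q.2 + q.1 ^ 2) := by
    rintro ⟨a, b⟩ ⟨a', b'⟩ h
    simp only [Prod.mk.injEq] at h ⊢
    obtain ⟨rfl, h⟩ := h
    exact ⟨rfl, add_right_cancel h⟩
  set U := (A ×ˢ A).image fun q : ZMod p × ZMod p => (q.1, q.2 + q.1 ^ 2) with hUdef
  have hU : 0 < U.card := by
    rw [hUdef, Finset.card_image_of_injective _ hinj, Finset.card_product, hcard]
    positivity
  -- nonzero parameters `z` for which `z⁻¹` is not a direction of `U`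
  set Z : Finset (ZMod p) := (insert 0 (S.toFinset.image (·⁻¹)))ᶜ with hZdef
  have hZcard : p ≤ (S.ncard + 1) + Z.card := by
    have h1 := Finset.card_insert_le (0 : ZMod p) (S.toFinset.image (·⁻¹))
    have h2 := Finset.card_image_le (s := S.toFinset) (f := (·⁻¹))
    have h3 := Finset.card_add_card_compl (insert (0 : ZMod p) (S.toFinset.image (·⁻¹)))
    rw [ZMod.card, ← hZdef] at h3
    rw [Set.ncard_eq_toFinset_card']
    omega
  have hZ : ∀ z ∈ Z, Set.InjOn (fun q : ZMod p × ZMod p => q.1 - q.2 * z) U := by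
    intro z hz q hq q' hq' h
    rw [hZdef, Finset.mem_compl, Finset.mem_insert, not_or] at hz
    obtain ⟨hz0, hzS⟩ := hz
    simp only [hUdef, Finset.coe_image, Set.mem_image, Finset.mem_coe,
      Finset.mem_product] at hq hq'
    obtain ⟨⟨a, b⟩, ⟨ha, hb⟩, rfl⟩ := hq
    obtain ⟨⟨a', b'⟩, ⟨ha', hb'⟩, rfl⟩ := hq'
    simp only at h ha hb ha' hb' ⊢
    by_cases haa : a = a'
    · subst haa
      have h1 := mul_right_cancel₀ hz0 (sub_right_injective h)
      rw [h1]
    · refine absurd ?_ hzS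
      rw [Finset.mem_image]
      refine ⟨z⁻¹, ?_, inv_inv z⟩
      rw [Set.mem_toFinset]
      refine ⟨a', ha', b, hb, b', hb', a, ha, haa, ?_⟩
      have hs : a - a' ≠ 0 := sub_ne_zero_of_ne haa
      field_simp
      linear_combination h
  obtain ⟨g, hg, hdvd⟩ := exists_lacunary_multiple U hU Z hZ (S.ncard + 1) (by omega) hZcard
  have hprod : ∏ q ∈ U, (X - C q.1) = ∏ a ∈ A, (X - C a) ^ n := by
    rw [hUdef, Finset.prod_image hinj.injOn, Finset.prod_product]
    simp only [Finset.prod_const, hcard]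
  rw [hprod] at hdvd
  have := sub_le_of_dvd_X_pow_sub A hcard hn hn2 g hdvd
  omega
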